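/- arXiv:2003.11216 — 3 statements merged into one kernel-verified Lean document; each statement's English description precedes it below -/
import Mathlib

section
/- Let a, b, d, μ, ν, γ > 0 be real constants, let t₀ ≤ t₁ be real numbers, and let e : ℝ → ℝⁿ be a function satisfying ‖e(t)‖ ≤ (b/a)(e^{a(t−t₀)} − 1) for all t ∈ [t₀, t₁]. If the triggering threshold is reached at t₁, i.e., d γ² ‖e(t₁)‖² ≥ μ e^{−ν t₁}, then the elapsed time satisfies t₁ − t₀ ≥ (1/a) ln( 1 + (a/(b γ)) √( μ e^{−ν t₁} / d ) ). -/
/-- The core quantitative claim of Theorem 2 (exclusion of Zeno behavior): if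
`‖e(t)‖ ≤ (b/a)(e^{a(t−t₀)} − 1)` on `[t₀, t₁]` and the triggering threshold
`d γ² ‖e(t₁)‖² ≥ μ e^{−ν t₁}` is reached at `t₁`, then
`t₁ − t₀ ≥ (1/a) ln(1 + (a/(bγ)) √(μ e^{−ν t₁}/d))`. -/
theorem inter_event_time_lower_bound (n : ℕ) (a b d μ ν γ : ℝ)
    (ha : 0 < a) (hb : 0 < b) (hd : 0 < d) (hμ : 0 < μ) (hν : 0 < ν) (hγ : 0 < γ)
    (t₀ t₁ : ℝ) (ht : t₀ ≤ t₁) (e : ℝ → EuclideanSpace ℝ (Fin n))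
    (hbound : ∀ t ∈ Set.Icc t₀ t₁, ‖e t‖ ≤ (b / a) * (Real.exp (a * (t - t₀)) - 1))
    (htrig : d * γ ^ 2 * ‖e t₁‖ ^ 2 ≥ μ * Real.exp (-ν * t₁)) :
    t₁ - t₀ ≥ (1 / a) * Real.log (1 + (a / (b * γ)) * Real.sqrt (μ * Real.exp (-ν * t₁) / d)) := by
  have h1 := hbound t₁ ⟨ht, le_refl _⟩
  have hs : Real.sqrt (μ * Real.exp (-ν * t₁) / d) ≤ γ * ‖e t₁‖ := by
    apply Real.sqrt_le_iff.mpr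
    refine ⟨by positivity, ?_⟩
    rw [div_le_iff₀ hd]
    nlinarith [htrig]
  have h2 : (a / (b * γ)) * Real.sqrt (μ * Real.exp (-ν * t₁) / d)
      ≤ Real.exp (a * (t₁ - t₀)) - 1 := by
    calc _ ≤ (a / (b * γ)) * (γ * ((b / a) * (Real.exp (a * (t₁ - t₀)) - 1))) := by
          gcongr
          exact hs.trans (by gcongr)
      _ = _ := by field_simp
  have h3 : Real.log (1 + (a / (b * γ)) * Real.sqrt (μ * Real.exp (-ν * t₁) / d))
      ≤ a * (t₁ - t₀) := by
    rw [Real.log_le_iff_le_exp (by positivity)]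
    linarith
  rw [ge_iff_le, one_div, inv_mul_le_iff₀ ha]
  exact h3
end

section
/- Let N ≥ 1, let φ₁, …, φ_N and ε₁, …, ε_N be vectors in ℝ^q, set φ̃_i = φ_i + ε_i for i = 1, …, N and φ̃₀ = 0. Let a_{ij} ≥ 0 (1 ≤ i, j ≤ N) be symmetric weights (a_{ij} = a_{ji}, a_{ii} = 0) and let a_{i0} ≥ 0 for i = 1, …, N. Then −Σ_{i=1}^N a_{i0} ⟨φ_i, φ̃_i⟩ − Σ_{i=1}^N Σ_{j=1}^N a_{ij} ⟨φ_i, φ̃_i − φ̃_j⟩ ≤ −(1/4) Σ_{i=1}^N Σ_{j=1}^N a_{ij} ‖φ_i − φ_j‖² − (1/2) Σ_{i=1}^N a_{i0} ‖φ_i‖² + Σ_{i=1}^N [ (a_{i0} + Σ_{j=1}^N a_{ij}) ‖ε_i‖² − (1/4) Σ_{j=0}^N a_{ij} ‖φ̃_i − φ̃_j‖² ]. -/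
open RealInnerProductSpace

theorem sum_symmetrize {N : ℕ} (F : Fin N → Fin N → ℝ) :
    ∑ i, ∑ j, F i j = ∑ i, ∑ j, (1 / 2) * (F i j + F j i) := by
  have h : ∑ i, ∑ j, F j i = ∑ i, ∑ j, F i j := Finset.sum_comm
  simp only [← Finset.mul_sum, Finset.sum_add_distrib, h]
  ring

theorem leader_term {E : Type*} [NormedAddCommGroup E] [InnerProductSpace ℝ E] (x e : E) :
    -⟪x, x + e⟫ ≤ -(1 / 2) * ‖x‖ ^ 2 + ‖e‖ ^ 2 - (1 / 4) * ‖x + e‖ ^ 2 := by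
  have h1 := norm_sub_sq_real (x + e) x
  rw [add_sub_cancel_left, real_inner_comm] at h1
  nlinarith [sq_nonneg ‖x + e‖, sq_nonneg ‖e‖]

theorem pair_term {E : Type*} [NormedAddCommGroup E] [InnerProductSpace ℝ E] (x y e f : E) :
    -((1 / 2) * (⟪x, (x + e) - (y + f)⟫ + ⟪y, (y + f) - (x + e)⟫))
      ≤ -(1 / 4) * ‖x - y‖ ^ 2 + (1 / 2) * (‖e‖ ^ 2 + ‖f‖ ^ 2)
        - (1 / 4) * ‖(x + e) - (y + f)‖ ^ 2 := by
  have h1 := norm_sub_sq_real ((x + e) - (y + f)) (x - y)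
  have h2 : (x + e) - (y + f) - (x - y) = e - f := by abel
  have h3 : ⟪x, (x + e) - (y + f)⟫ + ⟪y, (y + f) - (x + e)⟫
      = ⟪(x + e) - (y + f), x - y⟫ := by
    rw [← neg_sub (x + e) (y + f), inner_neg_right, real_inner_comm (x - y), inner_sub_left]
    ring
  have h4 := parallelogram_law_with_norm ℝ e f
  rw [h2] at h1
  rw [h3]
  nlinarith [mul_self_nonneg ‖e + f‖]

/-- The key Lyapunov-derivative estimate (equations (40)–(43)) in the proof of
Theorem 3: with `φ̃ᵢ = φᵢ + εᵢ`, `φ̃₀ = 0`, symmetric nonnegative weights `a i j`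
(zero diagonal) and leader weights `a0 i ≥ 0`,
`−Σᵢ a0 i ⟨φᵢ, φ̃ᵢ⟩ − Σᵢⱼ a i j ⟨φᵢ, φ̃ᵢ − φ̃ⱼ⟩
  ≤ −(1/4) Σᵢⱼ a i j ‖φᵢ − φⱼ‖² − (1/2) Σᵢ a0 i ‖φᵢ‖²
    + Σᵢ [(a0 i + Σⱼ a i j) ‖εᵢ‖² − (1/4) Σ_{j=0}^N a i j ‖φ̃ᵢ − φ̃ⱼ‖²]`,
where the `j = 0` term of the last inner sum is `a0 i * ‖φ̃ᵢ − φ̃₀‖²`. -/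
theorem lyapunov_derivative_estimate (N q : ℕ) (hN : 1 ≤ N)
    (φ ε φt : Fin N → EuclideanSpace ℝ (Fin q))
    (hφt : ∀ i, φt i = φ i + ε i)
    (φt0 : EuclideanSpace ℝ (Fin q)) (hφt0 : φt0 = 0)
    (a : Fin N → Fin N → ℝ) (ha : ∀ i j, 0 ≤ a i j)
    (hsymm : ∀ i j, a i j = a j i) (hdiag : ∀ i, a i i = 0)
    (a0 : Fin N → ℝ) (ha0 : ∀ i, 0 ≤ a0 i) :
    -(∑ i, a0 i * ⟪φ i, φt i⟫) - ∑ i, ∑ j, a i j * ⟪φ i, φt i - φt j⟫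
      ≤ -(1 / 4) * (∑ i, ∑ j, a i j * ‖φ i - φ j‖ ^ 2)
        - (1 / 2) * (∑ i, a0 i * ‖φ i‖ ^ 2)
        + ∑ i, ((a0 i + ∑ j, a i j) * ‖ε i‖ ^ 2
            - (1 / 4) * (a0 i * ‖φt i - φt0‖ ^ 2 + ∑ j, a i j * ‖φt i - φt j‖ ^ 2)) := by
  subst hφt0
  have hL : -(∑ i, a0 i * ⟪φ i, φt i⟫) ≤ ∑ i, a0 i *
      (-(1 / 2) * ‖φ i‖ ^ 2 + ‖ε i‖ ^ 2 - (1 / 4) * ‖φt i‖ ^ 2) := by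
    rw [← Finset.sum_neg_distrib]
    refine Finset.sum_le_sum fun i _ => ?_
    rw [← mul_neg, hφt]
    exact mul_le_mul_of_nonneg_left (leader_term _ _) (ha0 i)
  have hP : -(∑ i, ∑ j, a i j * ⟪φ i, φt i - φt j⟫) ≤ ∑ i, ∑ j, a i j *
      (-(1 / 4) * ‖φ i - φ j‖ ^ 2 + (1 / 2) * (‖ε i‖ ^ 2 + ‖ε j‖ ^ 2)
        - (1 / 4) * ‖φt i - φt j‖ ^ 2) := by
    rw [sum_symmetrize, ← Finset.sum_neg_distrib]
    refine Finset.sum_le_sum fun i _ => ?_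
    rw [← Finset.sum_neg_distrib]
    refine Finset.sum_le_sum fun j _ => ?_
    have h := mul_le_mul_of_nonneg_left (pair_term (φ i) (φ j) (ε i) (ε j)) (ha i j)
    rw [hsymm j i, hφt i, hφt j]
    linarith
  have hE : ∑ i, ∑ j, a i j * ‖ε i‖ ^ 2
      = ∑ i, ∑ j, a i j * ((1 / 2) * (‖ε i‖ ^ 2 + ‖ε j‖ ^ 2)) := by
    rw [sum_symmetrize]
    refine Finset.sum_congr rfl fun i _ => Finset.sum_congr rfl fun j _ => ?_
    rw [hsymm j i]
    ring
  have hL2 : ∑ i, a0 i * (-(1 / 2) * ‖φ i‖ ^ 2 + ‖ε i‖ ^ 2 - (1 / 4) * ‖φt i‖ ^ 2)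
      = -(1 / 2) * (∑ i, a0 i * ‖φ i‖ ^ 2) + ∑ i, a0 i * ‖ε i‖ ^ 2
        - (1 / 4) * ∑ i, a0 i * ‖φt i‖ ^ 2 := by
    simp only [Finset.mul_sum, ← Finset.sum_add_distrib, ← Finset.sum_sub_distrib]
    exact Finset.sum_congr rfl fun i _ => by ring
  have hP2 : ∑ i, ∑ j, a i j *
      (-(1 / 4) * ‖φ i - φ j‖ ^ 2 + (1 / 2) * (‖ε i‖ ^ 2 + ‖ε j‖ ^ 2)
        - (1 / 4) * ‖φt i - φt j‖ ^ 2)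
      = -(1 / 4) * (∑ i, ∑ j, a i j * ‖φ i - φ j‖ ^ 2)
        + ∑ i, ∑ j, a i j * ((1 / 2) * (‖ε i‖ ^ 2 + ‖ε j‖ ^ 2))
        - (1 / 4) * ∑ i, ∑ j, a i j * ‖φt i - φt j‖ ^ 2 := by
    simp only [Finset.mul_sum, ← Finset.sum_add_distrib, ← Finset.sum_sub_distrib]
    exact Finset.sum_congr rfl fun i _ => Finset.sum_congr rfl fun j _ => by ring
  have hR : ∑ i, ((a0 i + ∑ j, a i j) * ‖ε i‖ ^ 2
            - (1 / 4) * (a0 i * ‖φt i - 0‖ ^ 2 + ∑ j, a i j * ‖φt i - φt j‖ ^ 2))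
      = ∑ i, a0 i * ‖ε i‖ ^ 2 + ∑ i, ∑ j, a i j * ‖ε i‖ ^ 2
        - (1 / 4) * ((∑ i, a0 i * ‖φt i‖ ^ 2) + ∑ i, ∑ j, a i j * ‖φt i - φt j‖ ^ 2) := by
    simp only [sub_zero, add_mul, Finset.sum_mul, Finset.sum_add_distrib,
      Finset.sum_sub_distrib, ← Finset.mul_sum]
  rw [hR]
  linarith
end

section
/- Consider N heterogeneous linear agents with dynamics ẋ_i = A_i x_i + B_i u_i + E_i w₀ and outputs y_i = C_i x_i + F_i w₀ (i = 1, …, N), where x_i ∈ ℝ^{n_i}, u_i ∈ ℝ^{m_i}, y_i ∈ ℝ^{p}, and the exogenous signal w₀ ∈ ℝ^q satisfies ẇ₀ = S w₀. Suppose for each i there exist matrices Π_i ∈ ℝ^{n_i×q}, U_i ∈ ℝ^{m_i×q} and a common matrix R ∈ ℝ^{p×q} solving the regulator equations Π_i S = A_i Π_i + B_i U_i + E_i and R = C_i Π_i + F_i. Let K_{1i} be such that A_i + B_i K_{1i} is Hurwitz, set K_{2i} = U_i − K_{1i} Π_i, and let w_i : [0,∞) → ℝ^q be continuous observer signals satisfying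 w_i(t) − w₀(t) → 0 as t → ∞. If x_i solves the closed loop ẋ_i = A_i x_i + B_i (K_{1i} x_i + K_{2i} w_i) + E_i w₀, then y_i(t) − R w₀(t) → 0 as t → ∞ for every i; in particular, output consensus is achieved: y_i(t) − y_j(t) → 0 as t → ∞ for all i, j. -/
open Filter Topology

lemma hoc_scalar {V : Type*} [NormedAddCommGroup V] [NormedSpace ℂ V] (μ : ℂ) (hμ : μ.re < 0)
    (ψ h : ℝ → V) (hψ : ∀ t : ℝ, 0 ≤ t → HasDerivAt ψ (μ • ψ t + h t) t)
    (hh : Tendsto h atTop (𝓝 0)) : Tendsto ψ atTop (𝓝 0) := by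
  set a : ℝ := -μ.re with ha
  have ha0 : 0 < a := by linarith
  rw [Metric.tendsto_atTop]
  intro ε hε
  rw [Metric.tendsto_atTop] at hh
  have hδ : 0 < ε * a / 2 := by positivity
  obtain ⟨T0, hT0⟩ := hh _ hδ
  set T := max T0 0 with hT
  have hTnn : 0 ≤ T := le_max_right _ _
  set f : ℝ → V := fun t => Complex.exp (-μ * t) • ψ t with hf
  have hexp : ∀ t : ℝ, ‖Complex.exp (-μ * t)‖ = Real.exp (a * t) := by
    intro t
    rw [Complex.norm_exp]
    simp [ha]
  have hfd : ∀ t : ℝ, 0 ≤ t → HasDerivAt f (Complex.exp (-μ * t) • h t) t := by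
    intro t ht
    have h1 : HasDerivAt (fun t : ℝ => Complex.exp (-μ * t)) (Complex.exp (-μ * t) * (-μ)) t := by
      have h2 : HasDerivAt (fun t : ℝ => -μ * (t : ℂ)) (-μ) t := by
        simpa using (Complex.ofRealCLM.hasDerivAt (x := t)).const_mul (-μ)
      exact h2.cexp
    have h3 := h1.smul (hψ t ht)
    refine h3.congr_deriv ?_
    module
  have hB : ∀ t : ℝ, HasDerivAt
      (fun t : ℝ => ‖f T‖ + ε / 2 * (Real.exp (a * t) - Real.exp (a * T)))
      (ε * a / 2 * Real.exp (a * t)) t := by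
    intro t
    have h2 : HasDerivAt (fun t : ℝ => a * t) a t := by
      simpa using (hasDerivAt_id t).const_mul a
    refine (((h2.exp.sub_const (Real.exp (a * T))).const_mul (ε / 2)).const_add ‖f T‖).congr_deriv ?_
    ring
  have key : ∀ t, T ≤ t → ‖f t‖ ≤ ‖f T‖ + ε / 2 * (Real.exp (a * t) - Real.exp (a * T)) := by
    intro t ht
    refine image_norm_le_of_norm_deriv_right_le_deriv_boundary (a := T) (b := t)
      (f' := fun t => Complex.exp (-μ * t) • h t) ?_ ?_ ?_ hB ?_ (Set.right_mem_Icc.2 ht)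
    · intro s hs
      exact (hfd s (hTnn.trans hs.1)).continuousAt.continuousWithinAt
    · intro s hs
      exact (hfd s (hTnn.trans hs.1)).hasDerivWithinAt
    · simp
    · intro s hs
      rw [norm_smul, hexp, mul_comm]
      have := hT0 s ((le_max_left _ _).trans hs.1)
      rw [dist_zero_right] at this
      gcongr
  have hlim : Tendsto (fun t : ℝ => Real.exp (-(a * t)) * ‖f T‖) atTop (𝓝 0) := by
    have : Tendsto (fun t : ℝ => a * t) atTop atTop := tendsto_id.const_mul_atTop ha0
    simpa using (Real.tendsto_exp_neg_atTop_nhds_zero.comp this).mul_const ‖f T‖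
  obtain ⟨T1, hT1⟩ := (hlim.eventually_lt_const (half_pos hε)).exists_forall_of_atTop
  refine ⟨max T T1, fun t ht => ?_⟩
  have k := key t ((le_max_left _ _).trans ht)
  have l := hT1 t ((le_max_right _ _).trans ht)
  rw [dist_zero_right]
  have hn : ‖f t‖ = Real.exp (a * t) * ‖ψ t‖ := by rw [hf]; simp only [norm_smul, hexp]
  have hE : Real.exp (-(a * t)) * Real.exp (a * t) = 1 := by rw [← Real.exp_add]; simp
  have hp := Real.exp_pos (a * T)
  have hp2 := Real.exp_pos (-(a * t))
  have k2 : ‖f t‖ ≤ ‖f T‖ + ε / 2 * Real.exp (a * t) := by nlinarith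
  calc ‖ψ t‖ = Real.exp (-(a * t)) * ‖f t‖ := by rw [hn, ← mul_assoc, hE, one_mul]
    _ ≤ Real.exp (-(a * t)) * (‖f T‖ + ε / 2 * Real.exp (a * t)) := by gcongr
    _ = Real.exp (-(a * t)) * ‖f T‖ + ε / 2 * (Real.exp (-(a * t)) * Real.exp (a * t)) := by ring
    _ < ε := by rw [hE]; linarith

lemma hoc_mulVec_deriv {𝕜 : Type*} [RCLike 𝕜] {m n : ℕ} (M : Matrix (Fin m) (Fin n) 𝕜)
    (f : ℝ → Fin n → 𝕜) (f' : Fin n → 𝕜) (t : ℝ) (hf : HasDerivAt f f' t) :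
    HasDerivAt (fun t => M.mulVec (f t)) (M.mulVec f') t := by
  rw [hasDerivAt_pi] at hf ⊢
  intro i
  simp only [Matrix.mulVec, dotProduct]
  exact HasDerivAt.fun_sum fun j _ => (hf j).const_mul (M i j)

lemma hoc_mulVec_tendsto {𝕜 : Type*} [RCLike 𝕜] {m n : ℕ} (M : Matrix (Fin m) (Fin n) 𝕜)
    (f : ℝ → Fin n → 𝕜) (hf : Tendsto f atTop (𝓝 0)) :
    Tendsto (fun t => M.mulVec (f t)) atTop (𝓝 0) := by
  have hc : Continuous (fun v : Fin n → 𝕜 => M.mulVec v) := by fun_prop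
  exact (hc.tendsto' 0 0 (by simp)).comp hf

open Polynomial in
lemma hoc_cascade {n : ℕ} (M : Matrix (Fin n) (Fin n) ℂ) (s : Multiset ℂ) :
    (∀ μ ∈ s, μ.re < 0) → ∀ ψ g : ℝ → Fin n → ℂ,
    (∀ t : ℝ, 0 ≤ t → HasDerivAt ψ (M.mulVec (ψ t) + g t) t) →
    Tendsto g atTop (𝓝 0) →
    (∀ t, (aeval M (s.map (fun μ => X - C μ)).prod).mulVec (ψ t) = 0) →
    Tendsto ψ atTop (𝓝 0) := by
  induction s using Multiset.induction_on with
  | empty =>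
    intro _ ψ g _ _ h
    have : ψ = fun _ => 0 := by
      funext t
      simpa using h t
    rw [this]
    exact tendsto_const_nhds
  | cons μ s ih =>
    intro hs ψ g hψ hg h
    set D : Matrix (Fin n) (Fin n) ℂ := M - algebraMap ℂ _ μ with hD
    have hDv : ∀ v, D.mulVec v = M.mulVec v - μ • v := by
      intro v
      rw [hD, Matrix.sub_mulVec, Algebra.algebraMap_eq_smul_one, Matrix.smul_mulVec,
        Matrix.one_mulVec]
    have h2 : Tendsto (fun t => D.mulVec (ψ t)) atTop (𝓝 0) := by
      refine ih (fun ν hν => hs ν (Multiset.mem_cons_of_mem hν)) _ (fun t => D.mulVec (g t))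
        ?_ (hoc_mulVec_tendsto D g hg) ?_
      · intro t ht
        refine (hoc_mulVec_deriv D ψ _ t (hψ t ht)).congr_deriv ?_
        rw [Matrix.mulVec_add, Matrix.mulVec_mulVec, Matrix.mulVec_mulVec]
        congr 2
        rw [hD, sub_mul, mul_sub, Algebra.commutes]
      · intro t
        have := h t
        rw [Multiset.map_cons, Multiset.prod_cons, mul_comm, map_mul] at this
        rw [Matrix.mulVec_mulVec]
        simpa [hD] using this
    refine hoc_scalar μ (hs μ (Multiset.mem_cons_self _ _)) ψ
      (fun t => D.mulVec (ψ t) + g t) ?_ (by simpa using h2.add hg)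
    intro t ht
    refine (hψ t ht).congr_deriv ?_
    rw [hDv]
    abel

lemma hoc_hurwitz {n : ℕ} (M : Matrix (Fin n) (Fin n) ℝ)
    (hM : ∀ μ : ℂ, (M.map Complex.ofReal).charpoly.IsRoot μ → μ.re < 0)
    (φ g : ℝ → Fin n → ℝ)
    (hφ : ∀ t : ℝ, 0 ≤ t → HasDerivAt φ (M.mulVec (φ t) + g t) t)
    (hg : Tendsto g atTop (𝓝 0)) : Tendsto φ atTop (𝓝 0) := by
  set Mc := M.map Complex.ofReal with hMc
  have hsplit : Mc.charpoly = (Mc.charpoly.roots.map (fun μ => Polynomial.X - Polynomial.C μ)).prod :=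
    (IsAlgClosed.splits Mc.charpoly).eq_prod_roots_of_monic (Matrix.charpoly_monic Mc)
  have hc : Tendsto (fun t i => (φ t i : ℂ)) atTop (𝓝 (0 : Fin n → ℂ)) := by
    refine hoc_cascade Mc Mc.charpoly.roots
      (fun μ hμ => hM μ (Polynomial.isRoot_of_mem_roots hμ)) _ (fun t i => (g t i : ℂ)) ?_ ?_ ?_
    · intro t ht
      have := hφ t ht
      rw [hasDerivAt_pi] at this ⊢
      intro i
      refine (this i).ofReal_comp.congr_deriv ?_
      simp [hMc, Matrix.mulVec, dotProduct]
    · rw [tendsto_pi_nhds] at hg ⊢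
      intro i
      exact (Complex.continuous_ofReal.tendsto' 0 0 (by simp)).comp (hg i)
    · intro t
      rw [← hsplit, Matrix.aeval_self_charpoly, Matrix.zero_mulVec]
  rw [tendsto_pi_nhds] at hc ⊢
  intro i
  exact (Complex.continuous_re.tendsto' 0 0 (by simp)).comp (hc i)

/-- Theorem 4 of the paper: for heterogeneous agents `ẋᵢ = Aᵢxᵢ + Bᵢuᵢ + Eᵢw₀`,
`yᵢ = Cᵢxᵢ + Fᵢw₀` with exosystem `ẇ₀ = S w₀`, suppose the regulator equations
`Πᵢ S = Aᵢ Πᵢ + Bᵢ Uᵢ + Eᵢ`, `R = Cᵢ Πᵢ + Fᵢ` hold, `Aᵢ + Bᵢ K₁ᵢ` is Hurwitz,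
`K₂ᵢ = Uᵢ − K₁ᵢ Πᵢ`, and the continuous observer signals satisfy `wᵢ − w₀ → 0`.
Then under the closed loop `ẋᵢ = Aᵢxᵢ + Bᵢ(K₁ᵢxᵢ + K₂ᵢwᵢ) + Eᵢw₀` one has
`yᵢ − R w₀ → 0` for every `i`, and hence output consensus `yᵢ − yⱼ → 0`. -/
theorem heterogeneous_output_consensus (N p q : ℕ) (n m : Fin N → ℕ)
    (A : ∀ i, Matrix (Fin (n i)) (Fin (n i)) ℝ)
    (B : ∀ i, Matrix (Fin (n i)) (Fin (m i)) ℝ)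
    (C : ∀ i, Matrix (Fin p) (Fin (n i)) ℝ)
    (E : ∀ i, Matrix (Fin (n i)) (Fin q) ℝ)
    (F : ∀ i, Matrix (Fin p) (Fin q) ℝ)
    (S : Matrix (Fin q) (Fin q) ℝ)
    (Pmat : ∀ i, Matrix (Fin (n i)) (Fin q) ℝ)
    (U : ∀ i, Matrix (Fin (m i)) (Fin q) ℝ)
    (R : Matrix (Fin p) (Fin q) ℝ)
    (K₁ : ∀ i, Matrix (Fin (m i)) (Fin (n i)) ℝ)
    (K₂ : ∀ i, Matrix (Fin (m i)) (Fin q) ℝ)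
    (hreg1 : ∀ i, Pmat i * S = A i * Pmat i + B i * U i + E i)
    (hreg2 : ∀ i, R = C i * Pmat i + F i)
    (hHurwitz : ∀ i, ∀ μ : ℂ,
      ((A i + B i * K₁ i).map Complex.ofReal).charpoly.IsRoot μ → μ.re < 0)
    (hK₂ : ∀ i, K₂ i = U i - K₁ i * Pmat i)
    (w₀ : ℝ → Fin q → ℝ)
    (hw₀ : ∀ t : ℝ, 0 ≤ t → HasDerivAt w₀ (S.mulVec (w₀ t)) t)
    (w : ∀ _ : Fin N, ℝ → Fin q → ℝ)
    (hw : ∀ i, Continuous (w i))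
    (hwconv : ∀ i, Tendsto (fun t => w i t - w₀ t) atTop (𝓝 0))
    (x : ∀ i : Fin N, ℝ → Fin (n i) → ℝ)
    (hx : ∀ i, ∀ t : ℝ, 0 ≤ t → HasDerivAt (x i)
      ((A i).mulVec (x i t)
        + (B i).mulVec ((K₁ i).mulVec (x i t) + (K₂ i).mulVec (w i t))
        + (E i).mulVec (w₀ t)) t)
    (y : ∀ _ : Fin N, ℝ → Fin p → ℝ)
    (hy : ∀ i t, y i t = (C i).mulVec (x i t) + (F i).mulVec (w₀ t)) :
    (∀ i, Tendsto (fun t => y i t - R.mulVec (w₀ t)) atTop (𝓝 0)) ∧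
    (∀ i j, Tendsto (fun t => y i t - y j t) atTop (𝓝 0)) := by
  have hφ : ∀ i, Tendsto (fun t => x i t - (Pmat i).mulVec (w₀ t)) atTop (𝓝 0) := by
    intro i
    refine hoc_hurwitz _ (hHurwitz i) _
      (fun t => (B i * K₂ i).mulVec (w i t - w₀ t)) ?_ (hoc_mulVec_tendsto _ _ (hwconv i))
    intro t ht
    refine ((hx i t ht).sub (hoc_mulVec_deriv (Pmat i) w₀ _ t (hw₀ t ht))).congr_deriv ?_
    rw [Matrix.mulVec_mulVec, hreg1, hK₂]
    simp only [Matrix.mulVec_add, Matrix.mulVec_sub, Matrix.add_mulVec, Matrix.sub_mulVec,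
      Matrix.mulVec_mulVec, Matrix.mul_sub, Matrix.add_mul, Matrix.mul_assoc]
    abel
  have hmain : ∀ i, Tendsto (fun t => y i t - R.mulVec (w₀ t)) atTop (𝓝 0) := by
    intro i
    refine (hoc_mulVec_tendsto (C i) _ (hφ i)).congr fun t => ?_
    rw [hy, hreg2 i]
    simp only [Matrix.mulVec_sub, Matrix.add_mulVec, Matrix.mulVec_mulVec]
    abel
  refine ⟨hmain, fun i j => ?_⟩
  simpa using (hmain i).sub (hmain j)
end
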